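/- The denominator polynomial Q(z) = 24 + 18z + 6z^2 + z^3 of the Padé-(1,3) approximant has no zeros in the closed right half-plane: Q(z) ≠ 0 whenever Re(z) ≥ 0. -/

import Mathlib

/-! At a zero `z ≠ 0` of `a z³ + b z² + c z + d`, dividing the odd part by the even part gives
`(b z + d / z) * (a z + b) = -(b c - a d)`. If the coefficients satisfy the Routh–Hurwitz conditions
and `0 ≤ Re z`, the factors on the left lie in the closed and in the open right half-plane, so their
product cannot be a negative real number. -/

theorem re_inv_nonneg {z : ℂ} (hz : 0 ≤ z.re) : 0 ≤ (z⁻¹).re := by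
  rw [Complex.inv_re]
  exact div_nonneg hz (Complex.normSq_nonneg z)

theorem re_mul_add_div_nonneg {z : ℂ} {b d : ℝ} (hz : 0 ≤ z.re) (hb : 0 ≤ b) (hd : 0 ≤ d) :
    0 ≤ (b * z + d / z).re := by
  rw [div_eq_mul_inv, Complex.add_re, Complex.re_ofReal_mul, Complex.re_ofReal_mul]
  exact add_nonneg (mul_nonneg hb hz) (mul_nonneg hd (re_inv_nonneg hz))

theorem mul_ne_neg_ofReal_of_re_nonneg_of_re_pos {u v : ℂ} {r : ℝ} (hu : 0 ≤ u.re)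
    (hv : 0 < v.re) (hr : 0 < r) : u * v ≠ -(r : ℂ) := by
  intro h
  have hv0 : v ≠ 0 := by
    rintro rfl
    exact hv.false
  have hu_eq : u = (-r : ℝ) * v⁻¹ := by
    rw [Complex.ofReal_neg]
    exact (eq_mul_inv_iff_mul_eq₀ hv0).mpr h
  have hu_neg : u.re < 0 := by
    rw [hu_eq, Complex.re_ofReal_mul, Complex.inv_re]
    exact mul_neg_of_neg_of_pos (neg_neg_of_pos hr) (div_pos hv (Complex.normSq_pos.mpr hv0))
  exact hu_neg.not_ge hu

theorem mul_eq_neg_of_cubic_eq_zero {K : Type*} [Field K] {a b c d z : K} (hz : z ≠ 0)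
    (h : a * z ^ 3 + b * z ^ 2 + c * z + d = 0) :
    (b * z + d / z) * (a * z + b) = -(b * c - a * d) := by
  field_simp
  linear_combination b * h

theorem cubic_ne_zero_of_routh_hurwitz {a b c d : ℝ} {z : ℂ} (ha : 0 ≤ a) (hb : 0 < b) (hd : 0 < d)
    (had : a * d < b * c) (hz : 0 ≤ z.re) : a * z ^ 3 + b * z ^ 2 + c * z + d ≠ 0 := by
  intro h
  have hz0 : z ≠ 0 := by
    rintro rfl
    exact hd.ne' (by simpa using h)
  have hre : 0 < (a * z + b).re := by
    rw [Complex.add_re, Complex.re_ofReal_mul, Complex.ofReal_re]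
    exact add_pos_of_nonneg_of_pos (mul_nonneg ha hz) hb
  refine mul_ne_neg_ofReal_of_re_nonneg_of_re_pos (re_mul_add_div_nonneg hz hb.le hd.le) hre
    (sub_pos.mpr had) ?_
  push_cast
  exact mul_eq_neg_of_cubic_eq_zero hz0 h

/-- The denominator `Q(z) = 24 + 18z + 6z² + z³` of the Padé-(1,3) approximant to
`e^{-z}` has no zeros in the closed right half-plane. -/
theorem pade13_denominator_ne_zero (z : ℂ) (hz : 0 ≤ z.re) :
    24 + 18 * z + 6 * z ^ 2 + z ^ 3 ≠ 0 := by
  have hQ : ((1 : ℝ) : ℂ) * z ^ 3 + (6 : ℝ) * z ^ 2 + (18 : ℝ) * z + (24 : ℝ) ≠ 0 :=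
    cubic_ne_zero_of_routh_hurwitz (by norm_num) (by norm_num) (by norm_num) (by norm_num) hz
  convert hQ using 1
  push_cast
  ring
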